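/- Let d ≥ 1 and define f : ℝ^d → ℝ by f(x) = (2π)^{−d} ∫_{ℝ^d} e^{−|ξ|⁴} e^{i ξ·x} dξ (the integral is absolutely convergent and the result is real-valued). Then ∫_{ℝ^d} |f(x)| dx > 1. -/

import Mathlib

open Real MeasureTheory Set Filter
open scoped ENNReal

noncomputable section

/-- `ℝ^d` with the Euclidean norm. -/
abbrev Ed (d : ℕ) := EuclideanSpace ℝ (Fin d)

/-- The fundamental domain `[-π,π]^d` of the torus `𝕋^d = ℝ^d/2πℤ^d`. -/
def Qd (d : ℕ) : Set (Ed d) := {x | ∀ i, |x i| ≤ Real.pi}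

/-- The partial derivative `∂_{x_j} f` of `f : ℝ^d → ℝ`. -/
noncomputable def pd {d : ℕ} (f : Ed d → ℝ) (j : Fin d) (x : Ed d) : ℝ :=
  fderiv ℝ f x (EuclideanSpace.single j 1)

/-- `|∇f|²`, the squared Euclidean norm of the spatial gradient. -/
noncomputable def gradSq {d : ℕ} (f : Ed d → ℝ) (x : Ed d) : ℝ := ∑ j, pd f j x ^ 2

/-- `|∇f|`, the Euclidean norm of the spatial gradient. -/
noncomputable def gradNorm {d : ℕ} (f : Ed d → ℝ) (x : Ed d) : ℝ := Real.sqrt (gradSq f x)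

/-- The Laplacian `Δf = Σ_j ∂_{x_j}∂_{x_j} f`. -/
noncomputable def lapl {d : ℕ} (f : Ed d → ℝ) (x : Ed d) : ℝ := ∑ j, pd (pd f j) j x

/-- The slope-selection divergence term `∇·((|∇f|²−1)∇f) = Σ_j ∂_{x_j}((|∇f|²−1)∂_{x_j}f)`. -/
noncomputable def slopeDiv {d : ℕ} (f : Ed d → ℝ) (x : Ed d) : ℝ :=
  ∑ j, pd (fun y => (gradSq f y - 1) * pd f j y) j x

/-- `f` is `2π`-periodic in each coordinate. -/
def PeriodicSpace {d : ℕ} (f : Ed d → ℝ) : Prop :=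
  ∀ (j : Fin d) (x : Ed d), f (x + (2 * Real.pi) • EuclideanSpace.single j 1) = f x

/-- The biharmonic heat kernel `f(x) = (2π)^{−d} ∫_{ℝ^d} e^{−|ξ|⁴} e^{i ξ·x} dξ`
(the inverse Fourier transform of `e^{−|ξ|⁴}`). -/
noncomputable def biKernel (d : ℕ) (x : Ed d) : ℂ :=
  ((2 * Real.pi) ^ d)⁻¹ •
    ∫ ξ : Ed d, Complex.exp (Complex.I * (∑ i, (ξ i : ℂ) * (x i : ℂ)) - ((‖ξ‖ ^ 4 : ℝ) : ℂ))

/-- `C_d = ‖f‖_{L¹(ℝ^d)}` where `f` is the inverse Fourier transform of `e^{−|ξ|⁴}`. -/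
noncomputable def Cd (d : ℕ) : ℝ := ∫ x : Ed d, ‖biKernel d x‖

/-!
If `∫ |f| = ∫ f = 1`, then `f ≥ 0` and `𝓕 f` is the characteristic function of a probability
measure; when `𝓕 f` is real it must satisfy `1 - 𝓕 f (2v) ≤ 4 (1 - 𝓕 f v)`, because
`1 - cos 2θ ≤ 4 (1 - cos θ)`. The function `e^{-b|v|⁴}` is too flat at the origin for this:
doubling a small `v` multiplies `1 - e^{-b|v|⁴}` by about sixteen. Quantitatively, the trigonometric
polynomial `1 + 4 cos θ - cos 2θ` has absolute value at most `4`, so integrating it against `f`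
bounds `1 + 4 𝓕 f v - 𝓕 f (2v)` by `4 ∫ |f|`, while a suitable `v` makes this quantity exceed `4`.
-/

open Polynomial
open scoped Nat SchwartzMap FourierTransform RealInnerProductSpace

section FourierOfIntegrable

variable {V E : Type*} [NormedAddCommGroup V] [InnerProductSpace ℝ V] [FiniteDimensional ℝ V]
  [MeasurableSpace V] [BorelSpace V] [NormedAddCommGroup E] [NormedSpace ℂ E]

lemma abs_one_add_four_mul_cos_sub_cos_two_mul_le (θ : ℝ) :
    |1 + 4 * cos θ - cos (2 * θ)| ≤ 4 := by
  have hsq : 1 + 4 * cos θ - cos (2 * θ) = 4 - 2 * (1 - cos θ) ^ 2 := by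
    rw [cos_two_mul]
    ring
  rw [hsq, abs_le]
  constructor <;> nlinarith [neg_one_le_cos θ, cos_le_one θ]

lemma integrable_cos_inner_smul {f : V → E} (hf : Integrable f) (v : V) :
    Integrable fun x ↦ cos (2 * π * ⟪x, v⟫) • f x :=
  hf.bdd_smul (𝕜 := ℝ) 1 (by fun_prop) (ae_of_all _ fun x ↦ abs_cos_le_one _)

lemma integral_cos_inner_smul {f : V → E} (hf : Integrable f) (v : V) :
    ∫ x, cos (2 * π * ⟪x, v⟫) • f x = (2⁻¹ : ℂ) • (𝓕 f v + 𝓕 f (-v)) := by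
  have hint (w : V) : Integrable fun x ↦ 𝐞 (-⟪x, w⟫) • f x :=
    (Real.fourierIntegral_convergent_iff w).2 hf
  rw [Real.fourier_eq, Real.fourier_eq, ← integral_add (hint v) (hint (-v)), ← integral_smul]
  refine integral_congr_ae (ae_of_all _ fun x ↦ ?_)
  simp only [Circle.smul_def, Real.fourierChar_apply, ← add_smul, smul_smul, inner_neg_right,
    ← Complex.coe_smul (cos _)]
  congr 1
  push_cast
  rw [Complex.cos]
  ring_nf

lemma norm_fourier_zero_add_four_smul_sub_le {f : V → E} (hf : Integrable f)
    (heven : ∀ w, 𝓕 f (-w) = 𝓕 f w) (v : V) :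
    ‖𝓕 f 0 + (4 : ℝ) • 𝓕 f v - 𝓕 f ((2 : ℝ) • v)‖ ≤ 4 * ∫ x, ‖f x‖ := by
  have hcos (w : V) : ∫ x, cos (2 * π * ⟪x, w⟫) • f x = 𝓕 f w := by
    rw [integral_cos_inner_smul hf, heven, ← two_smul ℂ, inv_smul_smul₀ two_ne_zero]
  have hint (w : V) : Integrable fun x ↦ cos (2 * π * ⟪x, w⟫) • f x :=
    integrable_cos_inner_smul hf w
  have hint_four : Integrable fun x ↦ (4 : ℝ) • cos (2 * π * ⟪x, v⟫) • f x := (hint v).smul 4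
  have hcomb : 𝓕 f 0 + (4 : ℝ) • 𝓕 f v - 𝓕 f ((2 : ℝ) • v) =
      ∫ x, (1 + 4 * cos (2 * π * ⟪x, v⟫) - cos (2 * (2 * π * ⟪x, v⟫))) • f x := by
    have hdouble (x : V) : 2 * (2 * π * ⟪x, v⟫) = 2 * π * ⟪x, (2 : ℝ) • v⟫ := by
      rw [inner_smul_right]
      ring
    simp only [sub_smul, add_smul, one_smul, mul_smul, hdouble]
    rw [integral_sub (hf.fun_add hint_four) (hint _), integral_add hf hint_four, integral_smul,
      hcos, hcos, ← hcos 0]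
    simp
  rw [hcomb, ← integral_const_mul]
  refine norm_integral_le_of_norm_le (hf.norm.const_mul 4) (ae_of_all _ fun x ↦ ?_)
  rw [norm_smul]
  gcongr
  exact abs_one_add_four_mul_cos_sub_cos_two_mul_le _

end FourierOfIntegrable

section SchwartzFunctions

lemma abs_pow_mul_exp_neg_mul_sq_le {b : ℝ} (hb : 0 < b) (n : ℕ) (x : ℝ) :
    |x| ^ n * exp (-(b * x ^ 2)) ≤ n ! * exp (1 / (4 * b)) := by
  have hpow : |x| ^ n ≤ n ! * exp |x| := by
    have h := pow_div_factorial_le_exp |x| (abs_nonneg x) n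
    rwa [div_le_iff₀' (by positivity)] at h
  have hsquare : |x| + -(b * x ^ 2) ≤ 1 / (4 * b) := by
    rw [le_div_iff₀ (by positivity), ← sq_abs x]
    nlinarith [sq_nonneg (2 * b * |x| - 1)]
  calc |x| ^ n * exp (-(b * x ^ 2))
      ≤ n ! * exp |x| * exp (-(b * x ^ 2)) := by gcongr
    _ = n ! * exp (|x| + -(b * x ^ 2)) := by rw [mul_assoc, exp_add]
    _ ≤ n ! * exp (1 / (4 * b)) := by gcongr

lemma exists_abs_eval_mul_exp_neg_mul_sq_le {b : ℝ} (hb : 0 < b) (p : ℝ[X]) :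
    ∃ C, ∀ x : ℝ, |p.eval x| * exp (-(b * x ^ 2)) ≤ C := by
  refine ⟨∑ i ∈ p.support, |p.coeff i| * (i ! * exp (1 / (4 * b))), fun x ↦ ?_⟩
  calc |p.eval x| * exp (-(b * x ^ 2))
      ≤ (∑ i ∈ p.support, |p.coeff i * x ^ i|) * exp (-(b * x ^ 2)) := by
        rw [eval_eq_sum, Polynomial.sum_def]
        gcongr
        exact Finset.abs_sum_le_sum_abs _ _
    _ = ∑ i ∈ p.support, |p.coeff i| * (|x| ^ i * exp (-(b * x ^ 2))) := by
        simp only [Finset.sum_mul, abs_mul, abs_pow, mul_assoc]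
    _ ≤ _ := by
        refine Finset.sum_le_sum fun i _ ↦ mul_le_mul_of_nonneg_left ?_ (abs_nonneg _)
        exact abs_pow_mul_exp_neg_mul_sq_le hb i x

/-- The standard Gaussian `y ↦ e^{-y²/2}` as a Schwartz function; its iterated derivatives are
Hermite polynomials times the Gaussian. -/
def gaussianSchwartz : 𝓢(ℝ, ℝ) where
  toFun y := exp (-(y ^ 2 / 2))
  smooth' := by fun_prop
  decay' k n := by
    obtain ⟨C, hC⟩ := exists_abs_eval_mul_exp_neg_mul_sq_le (b := 1 / 2) (by norm_num)
      (X ^ k * (hermite n).map (Int.castRingHom ℝ))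
    refine ⟨C, fun x ↦ le_of_eq_of_le ?_ (hC x)⟩
    rw [norm_iteratedFDeriv_eq_norm_iteratedDeriv, iteratedDeriv_eq_iterate,
      deriv_gaussian_eq_hermite_mul_gaussian, eval_mul, eval_map, eval_pow, eval_X,
      show -(1 / 2 * x ^ 2) = -(x ^ 2 / 2) by ring]
    simp [aeval_def, mul_assoc]

variable {H : Type*} [NormedAddCommGroup H] [InnerProductSpace ℝ H]

/-- The radial Schwartz function `x ↦ f (c ‖x‖²)` obtained from a one-dimensional Schwartz
function `f`. -/
def schwartzCompMulNormSq {F : Type*} [NormedAddCommGroup F] [NormedSpace ℝ F] {c : ℝ}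
    (hc : c ≠ 0) (f : 𝓢(ℝ, F)) : 𝓢(H, F) :=
  SchwartzMap.compCLM ℝ (g := fun x : H ↦ c * ‖x‖ ^ 2)
    ((Function.HasTemperateGrowth.const c).mul (Function.hasTemperateGrowth_norm_sq H))
    ⟨1, 1 + |c|⁻¹, fun x ↦ by
      have hcancel : |c|⁻¹ * |c| = 1 := inv_mul_cancel₀ (abs_ne_zero.2 hc)
      calc ‖x‖ ≤ 1 + ‖x‖ ^ 2 := by nlinarith [sq_nonneg (‖x‖ - 1)]
        _ ≤ 1 + ‖x‖ ^ 2 + (|c|⁻¹ + |c| * ‖x‖ ^ 2) := le_add_of_nonneg_right (by positivity)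
        _ = (1 + |c|⁻¹) * (1 + |c| * ‖x‖ ^ 2) := by linear_combination -‖x‖ ^ 2 * hcancel
        _ = (1 + |c|⁻¹) * (1 + ‖c * ‖x‖ ^ 2‖) ^ 1 := by simp⟩ f

/-- The function `x ↦ e^{-b‖x‖⁴}`, `b > 0`, as a complex-valued Schwartz function, to which Fourier
inversion applies. It is encoded as the standard Gaussian evaluated at `√(2b) ‖x‖²`. -/
def quarticSchwartz {b : ℝ} (hb : 0 < b) : 𝓢(H, ℂ) :=
  (schwartzCompMulNormSq (c := √(2 * b)) (by positivity) gaussianSchwartz).postcompCLM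
    Complex.ofRealCLM

lemma quarticSchwartz_apply {b : ℝ} (hb : 0 < b) (x : H) :
    quarticSchwartz hb x = (exp (-(b * ‖x‖ ^ 4)) : ℝ) := by
  change ((exp (-((√(2 * b) * ‖x‖ ^ 2) ^ 2 / 2)) : ℝ) : ℂ) = _
  rw [mul_pow, sq_sqrt (by positivity)]
  ring_nf

end SchwartzFunctions

section QuarticKernel

variable {V : Type*} [NormedAddCommGroup V]

lemma exists_four_lt_one_add_exp_neg_norm_pow_four_sub [NormedSpace ℝ V] [Nontrivial V] {b : ℝ}
    (hb : 0 < b) :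
    ∃ v : V, 4 < 1 + 4 * exp (-(b * ‖v‖ ^ 4)) - exp (-(b * ‖(2 : ℝ) • v‖ ^ 4)) := by
  have hlog : 0 ≤ log (10 / 9) / b := div_nonneg (log_nonneg (by norm_num)) hb.le
  obtain ⟨v, hv⟩ := exists_norm_eq V (rpow_nonneg hlog (1 / 4))
  have hnorm : b * ‖v‖ ^ 4 = log (10 / 9) := by
    rw [hv, ← rpow_mul_natCast hlog, show (1 / 4 : ℝ) * (4 : ℕ) = 1 by norm_num, rpow_one,
      mul_div_cancel₀ _ hb.ne']
  have hexp : exp (-(b * ‖v‖ ^ 4)) = 9 / 10 := by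
    rw [hnorm, exp_neg, exp_log (by norm_num)]
    norm_num
  have hexp_two : exp (-(b * ‖(2 : ℝ) • v‖ ^ 4)) = (9 / 10) ^ 16 := by
    rw [← hexp, ← exp_nat_mul, norm_smul, norm_ofNat]
    ring_nf
  refine ⟨v, ?_⟩
  rw [hexp, hexp_two]
  norm_num

theorem one_lt_integral_norm_fourierInv_exp_neg_norm_pow_four [InnerProductSpace ℝ V]
    [FiniteDimensional ℝ V] [MeasurableSpace V] [BorelSpace V] [Nontrivial V] {b : ℝ}
    (hb : 0 < b) :
    1 < ∫ x, ‖𝓕⁻ (fun ξ : V ↦ ((exp (-(b * ‖ξ‖ ^ 4)) : ℝ) : ℂ)) x‖ := by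
  set f : 𝓢(V, ℂ) := 𝓕⁻ (quarticSchwartz hb : 𝓢(V, ℂ)) with hf
  have hcoe : 𝓕⁻ (fun ξ : V ↦ ((exp (-(b * ‖ξ‖ ^ 4)) : ℝ) : ℂ)) = f := by
    rw [hf, SchwartzMap.fourierInv_coe]
    exact congrArg 𝓕⁻ (funext fun ξ ↦ (quarticSchwartz_apply hb ξ).symm)
  have hfourier (w : V) : 𝓕 (f : V → ℂ) w = (exp (-(b * ‖w‖ ^ 4)) : ℝ) := by
    rw [← SchwartzMap.fourier_coe, FourierTransform.fourier_fourierInv_eq, quarticSchwartz_apply]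
  obtain ⟨v, hv⟩ := exists_four_lt_one_add_exp_neg_norm_pow_four_sub (V := V) hb
  have hle : 1 + 4 * exp (-(b * ‖v‖ ^ 4)) - exp (-(b * ‖(2 : ℝ) • v‖ ^ 4)) ≤ 4 * ∫ x, ‖f x‖ := by
    have heven (w : V) : 𝓕 (f : V → ℂ) (-w) = 𝓕 (f : V → ℂ) w := by
      rw [hfourier, hfourier, norm_neg]
    have hnorm := norm_fourier_zero_add_four_smul_sub_le f.integrable heven v
    refine (le_abs_self _).trans (le_of_eq_of_le ?_ hnorm)
    rw [hfourier, hfourier, hfourier, ← norm_eq_abs, ← Complex.norm_real]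
    simp
  rw [hcoe]
  linarith

end QuarticKernel

lemma sum_ofReal_mul_ofReal_eq_inner {ι : Type*} [Fintype ι] (ξ x : EuclideanSpace ℝ ι) :
    ∑ i, (ξ i : ℂ) * (x i : ℂ) = (⟪ξ, x⟫ : ℝ) := by
  simp [PiLp.inner_apply, mul_comm]

lemma biKernel_eq_fourierInv (d : ℕ) :
    biKernel d = 𝓕⁻ (fun ξ : Ed d ↦ ((exp (-((2 * π) ^ 4 * ‖ξ‖ ^ 4)) : ℝ) : ℂ)) := by
  ext x
  -- The dilation `ξ ↦ 2πξ` passes to the character `e^{2πi⟪ξ, x⟫}` of Mathlib; hence the `(2π)⁴`.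
  have hdilate := Measure.integral_comp_smul_of_nonneg volume
    (fun ξ : Ed d ↦ Complex.exp (Complex.I * (∑ i, (ξ i : ℂ) * (x i : ℂ)) - ((‖ξ‖ ^ 4 : ℝ) : ℂ)))
    (2 * π) (hR := by positivity)
  rw [finrank_euclideanSpace_fin] at hdilate
  rw [biKernel, ← hdilate, Real.fourierInv_eq']
  refine integral_congr_ae (ae_of_all _ fun ξ ↦ ?_)
  simp only [smul_eq_mul, Complex.ofReal_exp, ← Complex.exp_add, sum_ofReal_mul_ofReal_eq_inner,
    real_inner_smul_left, norm_smul, norm_of_nonneg two_pi_pos.le]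
  push_cast
  ring_nf

/-- Remark after Theorem 1.7: the inverse Fourier transform
`f = F⁻¹(e^{−|ξ|⁴})` on `ℝ^d` satisfies `∫_{ℝ^d} |f(x)| dx > 1`. -/
theorem stmt7 (d : ℕ) (hd : 1 ≤ d) : 1 < ∫ x : Ed d, ‖biKernel d x‖ := by
  have : Nonempty (Fin d) := ⟨⟨0, hd⟩⟩
  rw [biKernel_eq_fourierInv]
  exact one_lt_integral_norm_fourierInv_exp_neg_norm_pow_four (by positivity)
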